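/- arXiv:1008.0144 — 2 statements merged into one kernel-verified Lean document; each statement's English description precedes it below -/
import Mathlib

section
/- For every ν > −1, every 0 < s < t, and all x > 0, z > 0, the following 'negative-time' extension of the Chapman–Kolmogorov equation holds: ∫₀^∞ p^{(ν)}(t−s, z | y) · r^{(ν)}_t(y, x) dy = r^{(ν)}_s(z, x), where r^{(ν)}_t(y, x) = (1/(2t)) (y/x)^{ν/2} e^{(x+y)/(2t)} I_ν(√(xy)/t). -/
open MeasureTheory Real

/-- The modified Bessel function of the first kind `I_ν(z)`. -/
noncomputable def besselI (ν z : ℝ) : ℝ :=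
  ∑' n : ℕ, ((1 : ℝ) / (Real.Gamma ((n : ℝ) + 1) * Real.Gamma ((n : ℝ) + 1 + ν))) *
    (z / 2) ^ (2 * (n : ℝ) + ν)

/-- The BESQ^{(ν)} transition probability density `p^{(ν)}(t, y | x)`. -/
noncomputable def besqP (ν t y x : ℝ) : ℝ :=
  (1 / (2 * t)) * (y / x) ^ (ν / 2) * Real.exp (-(x + y) / (2 * t)) *
    besselI ν (Real.sqrt (x * y) / t)

/-- The kernel `r^{(ν)}_t(y, x)`, real form of the analytically continued
density `p^{(ν)}(−t, y | x)`. -/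
noncomputable def besqR (ν t y x : ℝ) : ℝ :=
  (1 / (2 * t)) * (y / x) ^ (ν / 2) * Real.exp ((x + y) / (2 * t)) *
    besselI ν (Real.sqrt (x * y) / t)

/-!
Writing `I_ν(w) = (w / 2) ^ ν C_ν(w² / 4)`, with `C_ν` the Bessel–Clifford function, the integrand
becomes a constant times `y ^ ν e ^ (-c y) C_ν(A y) C_ν(B y)`, where
`c = 1 / (2 (t - s)) - 1 / (2 t)` is positive because `0 < s < t`. The integral is thus Weber's
second exponential integral, `c ^ (-ν - 1) e ^ ((A + B) / c) C_ν(A B / c²)`. To evaluate it, expand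
both factors and integrate termwise, so that each term is a Gamma integral; the Chu–Vandermonde
identity then recognizes the resulting double series as the expansion of `e ^ α e ^ β C_ν(α β)` at
`α = A / c`, `β = B / c`.
-/

open Finset Filter
open scoped Nat

theorem descPochhammer_smeval_mul_Gamma {r : ℝ} (n : ℕ) (hr : 0 < r - n + 1) :
    (descPochhammer ℤ n).smeval r * Gamma (r - n + 1) = Gamma (r + 1) := by
  induction n with
  | zero => simp
  | succ n ih =>
    have hrn : 0 < r - n := by simpa [sub_add_eq_sub_sub] using hr
    rw [← ih (by linarith), Gamma_add_one hrn.ne', descPochhammer_succ_right,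
      Polynomial.smeval_mul, Polynomial.smeval_sub, Polynomial.smeval_X,
      Polynomial.smeval_natCast]
    simp [sub_add_eq_sub_sub, mul_assoc]

theorem cast_descFactorial_add_div_factorial {K : Type*} [Field K] [CharZero K] (i k : ℕ) :
    ((i + k).descFactorial k : K) / (i + k)! = 1 / i ! := by
  have h := Nat.factorial_mul_descFactorial (Nat.le_add_left k i)
  rw [Nat.add_sub_cancel] at h
  rw [div_eq_div_iff (Nat.cast_ne_zero.mpr (Nat.factorial_ne_zero _))
    (Nat.cast_ne_zero.mpr (Nat.factorial_ne_zero _)), one_mul, ← h]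
  push_cast
  ring

/-- The Taylor coefficient `1 / (n! Γ(n + 1 + ν))` of the Bessel–Clifford function of order `ν`.
At a pole of `Γ`, where Mathlib has `Gamma = 0`, division by zero gives the correct value `0` of the
entire function `1 / Γ`. -/
noncomputable def besselCliffordCoeff (ν : ℝ) (n : ℕ) : ℝ :=
  1 / (n ! * Gamma (n + 1 + ν))

/-- The Bessel–Clifford function `∑ wⁿ / (n! Γ(n + 1 + ν))`: the entire factor of `I_ν`, which frees
the Bessel function from its real power and square root. -/
noncomputable def besselClifford (ν w : ℝ) : ℝ :=
  ∑' n : ℕ, besselCliffordCoeff ν n * w ^ n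

theorem summable_norm_besselClifford (ν w : ℝ) :
    Summable fun n : ℕ ↦ ‖besselCliffordCoeff ν n * w ^ n‖ := by
  refine (Real.summable_pow_div_factorial ‖w‖).of_norm_bounded_eventually_nat ?_
  filter_upwards [eventually_ge_atTop ⌈1 - ν⌉₊] with n hn
  have htwo : 2 ≤ n + 1 + ν := by linarith [Nat.ceil_le.mp hn]
  have hGamma : 1 ≤ Gamma (n + 1 + ν) :=
    Gamma_two.symm.trans_le <| Gamma_strictMonoOn_Ici.monotoneOn Set.self_mem_Ici htwo htwo
  have hcoeff : besselCliffordCoeff ν n ≤ 1 / n ! :=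
    one_div_le_one_div_of_le (by positivity) (le_mul_of_one_le_right (by positivity) hGamma)
  have hpos : 0 ≤ besselCliffordCoeff ν n := by unfold besselCliffordCoeff; positivity
  rw [norm_norm, norm_mul, norm_pow, Real.norm_of_nonneg hpos, ← one_div_mul_eq_div]
  gcongr

theorem hasSum_besselClifford (ν w : ℝ) :
    HasSum (fun n : ℕ ↦ besselCliffordCoeff ν n * w ^ n) (besselClifford ν w) :=
  (summable_norm_besselClifford ν w).of_norm.hasSum

theorem hasSum_pow_div_factorial_mul_besselClifford (ν α β : ℝ) :
    HasSum (fun q : (ℕ × ℕ) × ℕ ↦ α ^ q.1.1 / q.1.1 ! * (β ^ q.1.2 / q.1.2 !) *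
      (besselCliffordCoeff ν q.2 * (α * β) ^ q.2))
      (exp (α + β) * besselClifford ν (α * β)) := by
  have hexp (w : ℝ) : HasSum (fun n : ℕ ↦ w ^ n / n !) (exp w) := by
    simpa only [exp_eq_exp_ℝ] using NormedSpace.expSeries_div_hasSum_exp w
  have hnorm (w : ℝ) : Summable fun n : ℕ ↦ ‖w ^ n / (n ! : ℝ)‖ :=
    (Real.summable_pow_div_factorial w).norm
  have hexp_mul : HasSum (fun p : ℕ × ℕ ↦ α ^ p.1 / p.1 ! * (β ^ p.2 / p.2 !)) (exp (α + β)) := by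
    have hsummable := summable_mul_of_summable_norm (hnorm α) (hnorm β)
    exact exp_add α β ▸ (hexp α).mul (hexp β) hsummable
  have hsummable := summable_mul_of_summable_norm hexp_mul.summable.norm
    (summable_norm_besselClifford ν (α * β))
  exact hexp_mul.mul (hasSum_besselClifford ν (α * β)) hsummable

theorem hasSum_descFactorial_mul_pow_div_factorial (ν α β : ℝ) :
    HasSum (fun q : (ℕ × ℕ) × ℕ ↦ besselCliffordCoeff ν q.2 * q.1.1.descFactorial q.2 *
      q.1.2.descFactorial q.2 * (α ^ q.1.1 / q.1.1 !) * (β ^ q.1.2 / q.1.2 !))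
      (exp (α + β) * besselClifford ν (α * β)) := by
  let shift (q : (ℕ × ℕ) × ℕ) : (ℕ × ℕ) × ℕ := ((q.1.1 + q.2, q.1.2 + q.2), q.2)
  have shift_injective : Function.Injective shift := by
    rintro ⟨⟨i, j⟩, k⟩ ⟨⟨i', j'⟩, k'⟩ h
    simp only [shift, Prod.mk.injEq] at h ⊢
    omega
  refine (shift_injective.hasSum_iff ?_).mp ?_
  · rintro ⟨⟨m, n⟩, k⟩ hq
    have hlt : m < k ∨ n < k := by
      by_contra! hle
      exact hq ⟨((m - k, n - k), k), by simp [shift, hle.1, hle.2]⟩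
    rcases hlt with h | h <;> simp [Nat.descFactorial_of_lt h]
  · refine (hasSum_pow_div_factorial_mul_besselClifford ν α β).congr_fun ?_
    rintro ⟨⟨i, j⟩, k⟩
    have hi := cast_descFactorial_add_div_factorial (K := ℝ) i k
    have hj := cast_descFactorial_add_div_factorial (K := ℝ) j k
    simp only [Function.comp_apply, shift, pow_add, mul_pow]
    linear_combination besselCliffordCoeff ν k * (α ^ i * α ^ k) * (β ^ j * β ^ k) *
      congrArg₂ (· * ·) hi hj

section Weber

variable {ν c : ℝ}

theorem Gamma_natCast_add_one_add_pos (hν : -1 < ν) (n : ℕ) : 0 < Gamma (n + 1 + ν) :=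
  Gamma_pos_of_pos (by linarith [n.cast_nonneg (α := ℝ)])

theorem besselCliffordCoeff_pos (hν : -1 < ν) (n : ℕ) : 0 < besselCliffordCoeff ν n :=
  one_div_pos.mpr <| mul_pos (by positivity) (Gamma_natCast_add_one_add_pos hν n)

theorem choose_mul_descPochhammer_smeval_mul_descPochhammer_smeval (hν : -1 < ν) (m : ℕ) {n k : ℕ}
    (hkn : k ≤ n) :
    n.choose k * ((descPochhammer ℤ k).smeval (m : ℝ) * (descPochhammer ℤ (n - k)).smeval (n + ν)) =
      besselCliffordCoeff ν k * m.descFactorial k * n.descFactorial k * Gamma (n + 1 + ν) := by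
  have hGamma := Gamma_natCast_add_one_add_pos hν k
  have hdesc : (descPochhammer ℤ (n - k)).smeval (n + ν) =
      Gamma (n + 1 + ν) / Gamma (k + 1 + ν) := by
    have hshift : (n + ν) - (n - k : ℕ) + 1 = k + 1 + ν := by push_cast [hkn]; ring
    have hpos : 0 < (n + ν) - (n - k : ℕ) + 1 := by linarith [k.cast_nonneg (α := ℝ)]
    have hmul := descPochhammer_smeval_mul_Gamma (n - k) hpos
    rwa [hshift, add_right_comm (n : ℝ), ← eq_div_iff hGamma.ne'] at hmul
  rw [hdesc, Polynomial.descPochhammer_smeval_eq_descFactorial,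
    Nat.descFactorial_eq_factorial_mul_choose n k, besselCliffordCoeff]
  push_cast
  field_simp

/-- The Chu–Vandermonde identity `(M + N)ₙ = ∑ C(n, k) (M)ₖ (N)ₙ₋ₖ` for falling factorials, at
`M = m` and `N = n + ν`. -/
theorem hasSum_besselCliffordCoeff_mul_descFactorial (hν : -1 < ν) (m n : ℕ) :
    HasSum (fun k ↦ besselCliffordCoeff ν k * m.descFactorial k * n.descFactorial k)
      (Gamma (m + n + 1 + ν) / (Gamma (m + 1 + ν) * Gamma (n + 1 + ν))) := by
  have hm := Gamma_natCast_add_one_add_pos hν m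
  have hn := Gamma_natCast_add_one_add_pos hν n
  have hdesc := descPochhammer_smeval_mul_Gamma (r := m + (n + ν)) n
    (by linarith [m.cast_nonneg (α := ℝ)])
  have hsum : ∑ k ∈ range (n + 1), besselCliffordCoeff ν k * m.descFactorial k * n.descFactorial k =
      Gamma (m + n + 1 + ν) / (Gamma (m + 1 + ν) * Gamma (n + 1 + ν)) := by
    rw [Ring.descPochhammer_smeval_add n (Commute.all (m : ℝ) (n + ν)),
      Nat.sum_antidiagonal_eq_sum_range_succ_mk,
      sum_congr rfl fun k hk ↦ choose_mul_descPochhammer_smeval_mul_descPochhammer_smeval hν m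
        (mem_range_succ_iff.mp hk), ← sum_mul,
      show (m + (n + ν) - n + 1 : ℝ) = m + 1 + ν by ring,
      show (m + (n + ν) + 1 : ℝ) = m + n + 1 + ν by ring] at hdesc
    rw [eq_div_iff (by positivity), ← hdesc]
    ring
  rw [← hsum]
  refine hasSum_sum_of_ne_finset_zero fun k hk ↦ ?_
  have hnk : n < k := by simpa [Nat.lt_succ_iff] using hk
  simp [Nat.descFactorial_of_lt hnk]

theorem hasSum_besselCliffordCoeff_mul_Gamma (hν : -1 < ν) (α β : ℝ) :
    HasSum (fun p : ℕ × ℕ ↦ besselCliffordCoeff ν p.1 * besselCliffordCoeff ν p.2 *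
      Gamma (p.1 + p.2 + 1 + ν) * α ^ p.1 * β ^ p.2)
      (exp (α + β) * besselClifford ν (α * β)) := by
  refine (hasSum_descFactorial_mul_pow_div_factorial ν α β).prod_fiberwise fun ⟨m, n⟩ ↦ ?_
  have hvalue : besselCliffordCoeff ν m * besselCliffordCoeff ν n * Gamma (m + n + 1 + ν) *
      α ^ m * β ^ n = Gamma (m + n + 1 + ν) / (Gamma (m + 1 + ν) * Gamma (n + 1 + ν)) *
        (α ^ m / m !) * (β ^ n / n !) := by
    simp only [besselCliffordCoeff]
    ring
  rw [hvalue]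
  exact ((hasSum_besselCliffordCoeff_mul_descFactorial hν m n).mul_right _).mul_right _

/-- The `(m, n)` term, `p = (m, n)`, of `y ^ ν e ^ (-c y) C_ν(A y) C_ν(B y)` after expanding both
Bessel–Clifford functions `C_ν`. -/
noncomputable def weberTerm (ν c A B : ℝ) (p : ℕ × ℕ) (y : ℝ) : ℝ :=
  y ^ ν * exp (-(c * y)) *
    (besselCliffordCoeff ν p.1 * (A * y) ^ p.1 * (besselCliffordCoeff ν p.2 * (B * y) ^ p.2))

theorem hasSum_weberTerm (ν c A B y : ℝ) :
    HasSum (fun p ↦ weberTerm ν c A B p y)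
      (y ^ ν * exp (-(c * y)) * (besselClifford ν (A * y) * besselClifford ν (B * y))) := by
  have hsummable := summable_mul_of_summable_norm (summable_norm_besselClifford ν (A * y))
    (summable_norm_besselClifford ν (B * y))
  exact ((hasSum_besselClifford ν _).mul (hasSum_besselClifford ν _) hsummable).mul_left _

theorem weberTerm_eq_rpow_mul_exp (ν c A B : ℝ) (p : ℕ × ℕ) {y : ℝ} (hy : 0 < y) :
    weberTerm ν c A B p y =
      besselCliffordCoeff ν p.1 * besselCliffordCoeff ν p.2 * A ^ p.1 * B ^ p.2 *
        (y ^ ((p.1 + p.2 + 1 + ν) - 1) * exp (-(c * y))) := by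
  rw [show (p.1 + p.2 + 1 + ν - 1 : ℝ) = p.1 + p.2 + ν by ring, rpow_add hy, rpow_add hy,
    rpow_natCast, rpow_natCast, weberTerm]
  ring

theorem norm_weberTerm (hν : -1 < ν) (c A B : ℝ) (p : ℕ × ℕ) {y : ℝ} (hy : 0 < y) :
    ‖weberTerm ν c A B p y‖ = weberTerm ν c |A| |B| p y := by
  have h₁ := besselCliffordCoeff_pos hν p.1
  have h₂ := besselCliffordCoeff_pos hν p.2
  simp only [weberTerm, norm_mul, norm_pow, Real.norm_eq_abs, abs_exp, abs_of_pos h₁, abs_of_pos h₂,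
    abs_of_pos hy, abs_of_pos (rpow_pos_of_pos hy ν)]

theorem integral_weberTerm (hν : -1 < ν) (hc : 0 < c) (A B : ℝ) (p : ℕ × ℕ) :
    ∫ y in Set.Ioi 0, weberTerm ν c A B p y =
      (1 / c) ^ (ν + 1) * (besselCliffordCoeff ν p.1 * besselCliffordCoeff ν p.2 *
        Gamma (p.1 + p.2 + 1 + ν) * (A / c) ^ p.1 * (B / c) ^ p.2) := by
  have hexponent : (0 : ℝ) < p.1 + p.2 + 1 + ν := by
    linarith [p.1.cast_nonneg (α := ℝ), p.2.cast_nonneg (α := ℝ)]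
  have hpow : (1 / c) ^ (p.1 + p.2 + 1 + ν) =
      (1 / c) ^ (ν + 1) * (1 / c) ^ p.1 * (1 / c) ^ p.2 := by
    rw [show (p.1 + p.2 + 1 + ν : ℝ) = ν + 1 + p.1 + p.2 by ring, rpow_add (by positivity),
      rpow_add (by positivity), rpow_natCast, rpow_natCast]
  rw [setIntegral_congr_fun measurableSet_Ioi fun y hy ↦ weberTerm_eq_rpow_mul_exp ν c A B p hy,
    integral_const_mul, integral_rpow_mul_exp_neg_mul_Ioi hexponent hc, hpow]
  ring

theorem integrableOn_weberTerm (hν : -1 < ν) (hc : 0 < c) (A B : ℝ) (p : ℕ × ℕ) :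
    IntegrableOn (weberTerm ν c A B p) (Set.Ioi 0) := by
  have hexponent : (-1 : ℝ) < p.1 + p.2 + 1 + ν - 1 := by
    linarith [p.1.cast_nonneg (α := ℝ), p.2.cast_nonneg (α := ℝ)]
  have h := integrableOn_rpow_mul_exp_neg_mul_rpow hexponent one_pos hc
  simp only [rpow_one, neg_mul] at h
  exact IntegrableOn.congr_fun (h.const_mul _)
    (fun y hy ↦ (weberTerm_eq_rpow_mul_exp ν c A B p hy).symm) measurableSet_Ioi

/-- Weber's second exponential integral. -/
theorem integral_rpow_mul_exp_mul_besselClifford_mul_besselClifford (hν : -1 < ν) (hc : 0 < c)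
    (A B : ℝ) :
    ∫ y in Set.Ioi 0,
        y ^ ν * exp (-(c * y)) * (besselClifford ν (A * y) * besselClifford ν (B * y)) =
      (1 / c) ^ (ν + 1) * (exp ((A + B) / c) * besselClifford ν (A * B / c ^ 2)) := by
  have hseries (A B : ℝ) : HasSum (fun p ↦ ∫ y in Set.Ioi 0, weberTerm ν c A B p y)
      ((1 / c) ^ (ν + 1) * (exp ((A + B) / c) * besselClifford ν (A * B / c ^ 2))) := by
    simp only [integral_weberTerm hν hc, add_div, sq, ← div_mul_div_comm]
    exact (hasSum_besselCliffordCoeff_mul_Gamma hν _ _).mul_left _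
  have hnorm : Summable fun p ↦ ∫ y in Set.Ioi 0, ‖weberTerm ν c A B p y‖ := by
    refine (hseries |A| |B|).summable.congr fun p ↦ ?_
    exact setIntegral_congr_fun measurableSet_Ioi fun y hy ↦ (norm_weberTerm hν c A B p hy).symm
  have hfubini := hasSum_integral_of_summable_integral_norm (integrableOn_weberTerm hν hc A B) hnorm
  simp only [(hasSum_weberTerm ν c A B _).tsum_eq] at hfubini
  exact hfubini.unique (hseries A B)

end Weber

theorem besselI_eq_rpow_mul_besselClifford (ν : ℝ) {w : ℝ} (hw : 0 < w) :
    besselI ν w = (w / 2) ^ ν * besselClifford ν (w ^ 2 / 4) := by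
  rw [besselI, besselClifford, ← tsum_mul_left]
  refine tsum_congr fun n ↦ ?_
  have hpow : (w / 2) ^ (2 * n + ν) = (w ^ 2 / 4) ^ n * (w / 2) ^ ν := by
    rw [rpow_add (by positivity), rpow_mul (by positivity), rpow_two, rpow_natCast, div_pow]
    norm_num
  rw [hpow, besselCliffordCoeff, Gamma_nat_eq_factorial]
  ring

section Kernels

variable {t x y : ℝ}

theorem div_rpow_mul_besselI_sqrt (ν : ℝ) (ht : 0 < t) (hx : 0 < x) (hy : 0 < y) :
    (y / x) ^ (ν / 2) * besselI ν (√(x * y) / t) =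
      (y / (2 * t)) ^ ν * besselClifford ν (x * y / (4 * t ^ 2)) := by
  have hbase : √(y / x) * (√(x * y) / t / 2) = y / (2 * t) := by
    rw [← mul_div_assoc, ← mul_div_assoc, ← sqrt_mul (by positivity),
      show y / x * (x * y) = y ^ 2 by field_simp, sqrt_sq hy.le, div_div, mul_comm t]
  have hpow : (y / x) ^ (ν / 2) = √(y / x) ^ ν := by
    rw [sqrt_eq_rpow, ← rpow_mul (by positivity), one_div_mul_eq_div]
  rw [besselI_eq_rpow_mul_besselClifford ν (by positivity), ← mul_assoc, hpow,
    ← mul_rpow (by positivity) (by positivity), hbase, div_pow, sq_sqrt (by positivity), div_div,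
    mul_comm 4]

theorem besqP_eq_besselClifford (ν : ℝ) (ht : 0 < t) (hx : 0 < x) (hy : 0 < y) :
    besqP ν t y x = 1 / (2 * t) * (y / (2 * t)) ^ ν * exp (-(x + y) / (2 * t)) *
      besselClifford ν (x * y / (4 * t ^ 2)) := by
  rw [besqP]
  linear_combination 1 / (2 * t) * exp (-(x + y) / (2 * t)) * div_rpow_mul_besselI_sqrt ν ht hx hy

theorem besqR_eq_besselClifford (ν : ℝ) (ht : 0 < t) (hx : 0 < x) (hy : 0 < y) :
    besqR ν t y x = 1 / (2 * t) * (y / (2 * t)) ^ ν * exp ((x + y) / (2 * t)) *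
      besselClifford ν (x * y / (4 * t ^ 2)) := by
  rw [besqR]
  linear_combination 1 / (2 * t) * exp ((x + y) / (2 * t)) * div_rpow_mul_besselI_sqrt ν ht hx hy

theorem besqP_mul_besqR (ν : ℝ) {u z : ℝ} (hu : 0 < u) (ht : 0 < t) (hx : 0 < x) (hy : 0 < y)
    (hz : 0 < z) :
    besqP ν u z y * besqR ν t y x =
      1 / (2 * u) * (1 / (2 * t)) * (z / (2 * u) * (1 / (2 * t))) ^ ν *
        exp (x / (2 * t) - z / (2 * u)) *
      (y ^ ν * exp (-((1 / (2 * u) - 1 / (2 * t)) * y)) *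
        (besselClifford ν (z / (4 * u ^ 2) * y) * besselClifford ν (x / (4 * t ^ 2) * y))) := by
  have hpow : (z / (2 * u)) ^ ν * (y / (2 * t)) ^ ν =
      (z / (2 * u) * (1 / (2 * t))) ^ ν * y ^ ν := by
    rw [← mul_rpow (by positivity) (by positivity), ← mul_rpow (by positivity) (by positivity)]
    ring_nf
  have hexp : exp (-(y + z) / (2 * u)) * exp ((x + y) / (2 * t)) =
      exp (x / (2 * t) - z / (2 * u)) * exp (-((1 / (2 * u) - 1 / (2 * t)) * y)) := by
    rw [← exp_add, ← exp_add]
    ring_nf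
  rw [besqP_eq_besselClifford ν hu hy hz, besqR_eq_besselClifford ν ht hx hy, mul_comm y z,
    mul_div_right_comm z, mul_div_right_comm x]
  linear_combination 1 / (2 * u) * (1 / (2 * t)) *
    (besselClifford ν (z / (4 * u ^ 2) * y) * besselClifford ν (x / (4 * t ^ 2) * y)) *
    congrArg₂ (· * ·) hpow hexp

/-- The right-hand side is Weber's integral for the integrand of `besqP_mul_besqR` at `t = s + u`,
where the rate `1 / (2 u) - 1 / (2 t)` simplifies to `s / (2 u (s + u))`. -/
theorem besqR_eq_const_mul_weber (ν : ℝ) {s u z : ℝ} (hs : 0 < s) (hu : 0 < u)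
    (hx : 0 < x) (hz : 0 < z) :
    besqR ν s z x =
      1 / (2 * u) * (1 / (2 * (s + u))) * (z / (2 * u) * (1 / (2 * (s + u)))) ^ ν *
        exp (x / (2 * (s + u)) - z / (2 * u)) *
      ((1 / (s / (2 * u * (s + u)))) ^ (ν + 1) *
        (exp ((z / (4 * u ^ 2) + x / (4 * (s + u) ^ 2)) / (s / (2 * u * (s + u)))) *
          besselClifford ν
            (z / (4 * u ^ 2) * (x / (4 * (s + u) ^ 2)) / (s / (2 * u * (s + u))) ^ 2))) := by
  have hpow : (z / (2 * u) * (1 / (2 * (s + u)))) ^ ν * (1 / (s / (2 * u * (s + u)))) ^ ν =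
      (z / (2 * s)) ^ ν := by
    rw [← mul_rpow (by positivity) (by positivity)]
    congr 1
    field_simp
  have hexp : exp (x / (2 * (s + u)) - z / (2 * u)) *
      exp ((z / (4 * u ^ 2) + x / (4 * (s + u) ^ 2)) / (s / (2 * u * (s + u)))) =
      exp ((x + z) / (2 * s)) := by
    rw [← exp_add]
    congr 1
    field_simp
    ring
  have harg : z / (4 * u ^ 2) * (x / (4 * (s + u) ^ 2)) / (s / (2 * u * (s + u))) ^ 2 =
      x * z / (4 * s ^ 2) := by
    field_simp
    norm_num
  rw [besqR_eq_besselClifford ν hs hx hz, harg, rpow_add_one (by positivity), ← hpow, ← hexp]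
  field_simp

end Kernels

/-- Negative-time extension of the Chapman–Kolmogorov equation:
`∫₀^∞ p^{(ν)}(t−s, z|y) r^{(ν)}_t(y, x) dy = r^{(ν)}_s(z, x)`. -/
theorem negative_time_chapman_kolmogorov'
    (ν : ℝ) (hν : -1 < ν) (s t : ℝ) (hs : 0 < s) (hst : s < t)
    (x z : ℝ) (hx : 0 < x) (hz : 0 < z) :
    ∫ y in Set.Ioi (0 : ℝ), besqP ν (t - s) z y * besqR ν t y x = besqR ν s z x := by
  obtain ⟨u, hu, rfl⟩ : ∃ u, 0 < u ∧ t = s + u := ⟨t - s, sub_pos.mpr hst, by ring⟩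
  have hrate : 1 / (2 * u) - 1 / (2 * (s + u)) = s / (2 * u * (s + u)) := by field_simp; ring
  have hintegrand (y : ℝ) (hy : 0 < y) := besqP_mul_besqR ν hu (hs.trans hst) hx hy hz
  rw [add_sub_cancel_left, setIntegral_congr_fun measurableSet_Ioi hintegrand, integral_const_mul,
    hrate, integral_rpow_mul_exp_mul_besselClifford_mul_besselClifford hν (by positivity),
    besqR_eq_const_mul_weber ν hs hu hx hz]
end

section
/- Let ν > −1, m ≥ 0, and let a₁, …, a_m be positive reals. For t > 0 and x > 0 define P_t(x) = ∫₀^∞ q^{(ν)}_t(v, x) · ∏_{k=1}^m (−v − a_k) dv. Then for all 0 < s < t and all x > 0: ∫₀^∞ P_t(y) · p^{(ν)}(t−s, y | x) dy = P_s(x). -/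
open MeasureTheory Real

/-- The Bessel function of the first kind `J_ν(z)`. -/
noncomputable def besselJ (ν z : ℝ) : ℝ :=
  ∑' n : ℕ, ((-1 : ℝ) ^ n / (Real.Gamma ((n : ℝ) + 1) * Real.Gamma ((n : ℝ) + 1 + ν))) *
    (z / 2) ^ (2 * (n : ℝ) + ν)

/-- The kernel `q^{(ν)}_t(v, y)`, real form of `p^{(ν)}(−t, −v | y)`. -/
noncomputable def besqQ (ν t v y : ℝ) : ℝ :=
  (1 / (2 * t)) * (v / y) ^ (ν / 2) * Real.exp ((y - v) / (2 * t)) *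
    besselJ ν (Real.sqrt (v * y) / t)

/-- Real form of the type-II multiple orthogonal polynomial evaluated along the
BESQ^{(ν)} backward flow: `P_t(x) = ∫₀^∞ q^{(ν)}_t(v, x) ∏ₖ (−v − aₖ) dv`. -/
noncomputable def typeIIflow (ν : ℝ) {m : ℕ} (a : Fin m → ℝ) (t x : ℝ) : ℝ :=
  ∫ v in Set.Ioi (0 : ℝ), besqQ ν t v x * ∏ k : Fin m, (-v - a k)

open Polynomial Finset ProbabilityTheory

/-!
Let `b = ν + 1` and `c = 2t`. Expanding the Bessel series exhibits both kernels as one mixture of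
Gamma densities with Poisson weights: `p(t, y | x)` has Poisson parameter `x / c`, and `q_t(v, y)`
has the negative parameter `-y / c`. By Chu–Vandermonde the `k`-th moment of the mixture with
parameter `z / c` is `∑ᵢ (k choose i) Γ(b + k) / Γ(b + i) c ^ (k - i) z ^ i`. Hence integrating a
polynomial against the kernel evaluates at `z` its image under the Taylor shift `X ↦ X + c`,
conjugated by the rescaling `X ^ k ↦ Γ(b + k) X ^ k`. These conjugated shifts compose additively in
`c`, and reflecting `X` flips the sign of `c`, so the backward step `2t` followed by the forward
step `2(t - s)` leaves the backward step `2s`.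
-/

section PolynomialShift

variable {R : Type*} [CommSemiring R]

/-- The diagonal operator `X ^ n ↦ w n X ^ n` on polynomials. -/
noncomputable def coeffMul (w : ℕ → R) : R[X] →ₗ[R] R[X] :=
  Polynomial.lsum fun n => w n • monomial n

theorem coeffMul_monomial (w : ℕ → R) (n : ℕ) (r : R) :
    coeffMul w (monomial n r) = monomial n (w n * r) := by
  simp [coeffMul, sum_monomial_index, smul_monomial]

theorem coeff_coeffMul (w : ℕ → R) (p : R[X]) (n : ℕ) :
    (coeffMul w p).coeff n = w n * p.coeff n := by
  induction p using Polynomial.induction_on' with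
  | add p q hp hq => simp [hp, hq, mul_add]
  | monomial k r =>
    rw [coeffMul_monomial, coeff_monomial, coeff_monomial]
    split_ifs with h <;> simp [h]

theorem coeffMul_coeffMul_of_mul_eq_one {u w : ℕ → R} (h : ∀ n, u n * w n = 1) (p : R[X]) :
    coeffMul u (coeffMul w p) = p := by
  ext n
  rw [coeff_coeffMul, coeff_coeffMul, ← mul_assoc, h, one_mul]

theorem coeffMul_comp_C_mul_X (w : ℕ → R) (r : R) (p : R[X]) :
    coeffMul w (p.comp (C r * X)) = (coeffMul w p).comp (C r * X) := by
  ext n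
  simp only [coeff_coeffMul, comp_C_mul_X_coeff, mul_assoc]

theorem taylor_comp_C_mul_X (c r : R) (p : R[X]) :
    taylor c (p.comp (C r * X)) = (taylor (r * c) p).comp (C r * X) := by
  simp only [taylor_apply, comp_assoc, mul_comp, add_comp, C_comp, X_comp, C_mul, mul_add]

/-- The Taylor shift `p(X) ↦ p(X + c)` conjugated by the rescaling `X ^ k ↦ Γ(b + k) X ^ k`. It is
the exponential `exp (c (X ∂² + b ∂))` of the generator of the squared Bessel process of index
`b - 1`, up to time scale, acting on polynomials. -/
noncomputable def gammaTaylor (b c : ℝ) (p : ℝ[X]) : ℝ[X] :=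
  coeffMul (fun k => (Gamma (b + k))⁻¹) (taylor c (coeffMul (fun k => Gamma (b + k)) p))

theorem gammaTaylor_add (b c : ℝ) (p q : ℝ[X]) :
    gammaTaylor b c (p + q) = gammaTaylor b c p + gammaTaylor b c q := by
  simp only [gammaTaylor, map_add]

theorem gammaTaylor_gammaTaylor {b : ℝ} (hb : 0 < b) (c d : ℝ) (p : ℝ[X]) :
    gammaTaylor b c (gammaTaylor b d p) = gammaTaylor b (c + d) p := by
  have hΓ (k : ℕ) : Gamma (b + k) * (Gamma (b + k))⁻¹ = 1 :=
    mul_inv_cancel₀ (Gamma_pos_of_pos (by positivity)).ne'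
  rw [gammaTaylor, gammaTaylor, coeffMul_coeffMul_of_mul_eq_one hΓ, taylor_taylor, gammaTaylor]

theorem gammaTaylor_comp_C_mul_X (b c r : ℝ) (p : ℝ[X]) :
    gammaTaylor b c (p.comp (C r * X)) = (gammaTaylor b (r * c) p).comp (C r * X) := by
  simp only [gammaTaylor, coeffMul_comp_C_mul_X, taylor_comp_C_mul_X]

theorem eval_gammaTaylor_monomial (b c z r : ℝ) (k : ℕ) :
    (gammaTaylor b c (monomial k r)).eval z = r * ∑ ij ∈ antidiagonal k,
      k.choose ij.1 * (Gamma (b + k) / Gamma (b + ij.1)) * c ^ ij.2 * z ^ ij.1 := by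
  have hterm (i j : ℕ) : k.choose i • (X ^ i * C c ^ j) = monomial i (k.choose i * c ^ j) := by
    rw [nsmul_eq_mul, ← C_mul_X_pow_eq_monomial, C_mul, C_eq_natCast, C_pow]
    ring
  simp only [gammaTaylor, coeffMul_monomial, taylor_monomial, (Commute.all X (C c)).add_pow',
    hterm, mul_sum, C_mul_monomial, map_sum, eval_finsetSum, eval_monomial]
  exact sum_congr rfl fun ij _ => by ring

end PolynomialShift

section PoissonMoments

theorem Gamma_add_nat_div_Gamma_eq_descPochhammer {x : ℝ} (hx : 0 < x) (k : ℕ) :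
    Gamma (x + k) / Gamma x = (descPochhammer ℝ k).eval (x + k - 1) := by
  have hΓ : Gamma x ≠ 0 := (Gamma_pos_of_pos hx).ne'
  rw [descPochhammer_eval_eq_ascPochhammer, show x + k - 1 - k + 1 = x by ring]
  induction k with
  | zero => simp [hΓ]
  | succ k ih =>
    rw [ascPochhammer_succ_eval, ← ih, Nat.cast_succ, ← add_assoc,
      Gamma_add_one (by positivity : x + k ≠ 0)]
    ring

theorem Gamma_nat_add_add_div_Gamma_nat_add {b : ℝ} (hb : 0 < b) (n k : ℕ) :
    Gamma (n + b + k) / Gamma (n + b) = ∑ ij ∈ antidiagonal k,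
      k.choose ij.1 * (Gamma (b + k) / Gamma (b + ij.1)) * n.descFactorial ij.1 := by
  have vandermonde := Ring.descPochhammer_smeval_add k (Commute.all (n : ℝ) (b + k - 1))
  have smeval_eq (j : ℕ) (r : ℝ) :
      (descPochhammer ℤ j).smeval r = (descPochhammer ℝ j).eval r := by
    rw [eval_eq_smeval, ← descPochhammer_map (Int.castRingHom ℝ), ← aeval_eq_smeval,
      ← eval_eq_smeval, eval_map, aeval_def]
    rfl
  simp only [smeval_eq] at vandermonde
  rw [Gamma_add_nat_div_Gamma_eq_descPochhammer (by positivity),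
    show (n : ℝ) + b + k - 1 = n + (b + k - 1) by ring, vandermonde]
  refine sum_congr rfl fun ij hij => ?_
  have hk : b + k = b + ij.1 + ij.2 := by
    rw [← mem_antidiagonal.1 hij, Nat.cast_add, add_assoc]
  rw [hk, Gamma_add_nat_div_Gamma_eq_descPochhammer (by positivity),
    descPochhammer_eval_eq_descFactorial]
  ring

/-- The Poisson weights `e⁻ʷ wⁿ / n!` with an arbitrary real parameter `w`; for `w < 0` they
alternate in sign. -/
noncomputable def poissonWeight (w : ℝ) (n : ℕ) : ℝ :=
  exp (-w) * (w ^ n / n.factorial)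

theorem abs_poissonWeight (w : ℝ) (n : ℕ) :
    |poissonWeight w n| = exp (|w| - w) * poissonWeight |w| n := by
  rw [poissonWeight, poissonWeight, abs_mul, abs_div, abs_pow, abs_exp, Nat.abs_cast,
    ← mul_assoc, ← exp_add]
  ring_nf

theorem hasSum_poissonWeight_mul_descFactorial (w : ℝ) (j : ℕ) :
    HasSum (fun n => poissonWeight w n * n.descFactorial j) (w ^ j) := by
  have hvanish (n : ℕ) (hn : n ∈ range j) : poissonWeight w n * n.descFactorial j = 0 := by
    rw [Nat.descFactorial_of_lt (mem_range.1 hn), Nat.cast_zero, mul_zero]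
  have hshift (n : ℕ) : poissonWeight w (n + j) * (n + j).descFactorial j =
      w ^ j * exp (-w) * (w ^ n / n.factorial) := by
    have hfact := Nat.factorial_mul_descFactorial (Nat.le_add_left j n)
    rw [Nat.add_sub_cancel] at hfact
    have hdesc : ((n + j).descFactorial j : ℝ) ≠ 0 :=
      Nat.cast_ne_zero.2 (Nat.descFactorial_pos.2 (Nat.le_add_left j n)).ne'
    rw [poissonWeight, ← hfact, Nat.cast_mul, pow_add]
    field_simp
  have hexp := (NormedSpace.expSeries_div_hasSum_exp w).mul_left (w ^ j * exp (-w))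
  rw [← exp_eq_exp_ℝ, mul_assoc, ← exp_add, neg_add_cancel, exp_zero, mul_one] at hexp
  rwa [← hasSum_nat_add_iff' j, sum_eq_zero hvanish, sub_zero, funext hshift]

theorem hasSum_poissonWeight_mul_Gamma_div_Gamma {b : ℝ} (hb : 0 < b) (w : ℝ) (k : ℕ) :
    HasSum (fun n => poissonWeight w n * (Gamma (n + b + k) / Gamma (n + b)))
      (∑ ij ∈ antidiagonal k,
        k.choose ij.1 * (Gamma (b + k) / Gamma (b + ij.1)) * w ^ ij.1) := by
  convert! hasSum_sum (s := antidiagonal k) fun ij _ =>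
    (hasSum_poissonWeight_mul_descFactorial w ij.1).mul_left
      (k.choose ij.1 * (Gamma (b + k) / Gamma (b + ij.1))) using 1
  funext n
  rw [Gamma_nat_add_add_div_Gamma_nat_add hb, mul_sum]
  exact sum_congr rfl fun ij _ => by ring

end PoissonMoments

theorem integrable_tsum_of_summable_integral_norm {α E ι : Type*} [MeasurableSpace α]
    {μ : Measure α} [NormedAddCommGroup E] [CompleteSpace E] [Countable ι]
    {F : ι → α → E} (hF : ∀ i, Integrable (F i) μ) (hsum : Summable fun i => ∫ a, ‖F i a‖ ∂μ) :
    Integrable (fun a => ∑' i, F i a) μ := by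
  have hL1 : ∑' i, ‖(hF i).toL1 (F i)‖ₑ ≠ ⊤ :=
    tsum_enorm_ne_top_iff_summable_norm.2 (by simpa only [L1.norm_of_fun_eq_integral_norm])
  refine (L1.integrable_coeFn (∑' i, (hF i).toL1 (F i))).congr ((Lp.coeFn_tsum hL1).trans ?_)
  filter_upwards [ae_all_iff.2 fun i => (hF i).coeFn_toL1] with a ha
  exact tsum_congr ha

section GammaMoments

variable {a r : ℝ}

theorem pow_mul_gammaPDFReal_of_pos {v : ℝ} (hv : 0 < v) (k : ℕ) :
    v ^ k * gammaPDFReal a r v =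
      r ^ a / Gamma a * (v ^ (a + k - 1) * exp (-(r * v))) := by
  rw [gammaPDFReal, if_pos hv.le, add_sub_right_comm, rpow_add_natCast hv.ne']
  ring

theorem setIntegral_pow_mul_gammaPDFReal (ha : 0 < a) (hr : 0 < r) (k : ℕ) :
    ∫ v in Set.Ioi 0, v ^ k * gammaPDFReal a r v = Gamma (a + k) / Gamma a / r ^ k := by
  have hra : r ^ a ≠ 0 := (rpow_pos_of_pos hr a).ne'
  rw [setIntegral_congr_fun measurableSet_Ioi fun v hv => pow_mul_gammaPDFReal_of_pos hv k,
    integral_const_mul, integral_rpow_mul_exp_neg_mul_Ioi (by positivity) hr, one_div,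
    inv_rpow hr.le, rpow_add_natCast hr.ne']
  field_simp

theorem integrableOn_pow_mul_gammaPDFReal (ha : 0 < a) (hr : 0 < r) (k : ℕ) :
    IntegrableOn (fun v => v ^ k * gammaPDFReal a r v) (Set.Ioi 0) := by
  refine Integrable.of_integral_ne_zero ?_
  rw [setIntegral_pow_mul_gammaPDFReal ha hr]
  have := Gamma_pos_of_pos ha
  have : 0 < Gamma (a + k) := Gamma_pos_of_pos (by positivity)
  positivity

end GammaMoments

section PoissonGammaMixture

/-- The mixture of the Gamma densities of shape `n + b` and scale `c` with the signed Poisson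
weights of parameter `z / c`. For `b = ν + 1` and `c = 2t` it is the analytic continuation in `z` of
the squared Bessel transition density from `z` to `v`. -/
noncomputable def poissonGammaMixture (b c z v : ℝ) : ℝ :=
  ∑' n : ℕ, poissonWeight (z / c) n * gammaPDFReal (n + b) c⁻¹ v

theorem pow_mul_poissonGammaMixture (b c z v : ℝ) (k : ℕ) :
    v ^ k * poissonGammaMixture b c z v =
      ∑' n : ℕ, poissonWeight (z / c) n * (v ^ k * gammaPDFReal (n + b) c⁻¹ v) := by
  rw [poissonGammaMixture, ← tsum_mul_left]
  exact tsum_congr fun n => mul_left_comm _ _ _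

variable {b c : ℝ}

theorem integrableOn_poissonGammaMixture_term (hb : 0 < b) (hc : 0 < c) (w : ℝ) (k n : ℕ) :
    IntegrableOn (fun v => poissonWeight w n * (v ^ k * gammaPDFReal (n + b) c⁻¹ v))
      (Set.Ioi 0) :=
  (integrableOn_pow_mul_gammaPDFReal (by positivity) (inv_pos.2 hc) k).const_mul _

theorem summable_setIntegral_norm_poissonGammaMixture_term (hb : 0 < b) (hc : 0 < c) (w : ℝ)
    (k : ℕ) : Summable fun n : ℕ =>
      ∫ v in Set.Ioi 0, ‖poissonWeight w n * (v ^ k * gammaPDFReal (n + b) c⁻¹ v)‖ := by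
  have hnorm (n : ℕ) :
      ∫ v in Set.Ioi 0, ‖poissonWeight w n * (v ^ k * gammaPDFReal (n + b) c⁻¹ v)‖ =
        exp (|w| - w) * (poissonWeight |w| n * (Gamma (n + b + k) / Gamma (n + b)) / c⁻¹ ^ k) := by
    have habs : ∀ v ∈ Set.Ioi (0 : ℝ),
        ‖poissonWeight w n * (v ^ k * gammaPDFReal (n + b) c⁻¹ v)‖ =
          |poissonWeight w n| * (v ^ k * gammaPDFReal (n + b) c⁻¹ v) := fun v hv => by
      rw [norm_mul, norm_eq_abs, norm_of_nonneg]
      exact mul_nonneg (pow_nonneg (Set.mem_Ioi.1 hv).le k)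
        (gammaPDFReal_nonneg (by positivity) (inv_pos.2 hc) v)
    rw [setIntegral_congr_fun measurableSet_Ioi habs, integral_const_mul,
      setIntegral_pow_mul_gammaPDFReal (by positivity) (inv_pos.2 hc), abs_poissonWeight]
    ring
  rw [funext hnorm]
  exact ((hasSum_poissonWeight_mul_Gamma_div_Gamma hb |w| k).summable.div_const _).mul_left _

theorem integrableOn_pow_mul_poissonGammaMixture (hb : 0 < b) (hc : 0 < c) (z : ℝ) (k : ℕ) :
    IntegrableOn (fun v => v ^ k * poissonGammaMixture b c z v) (Set.Ioi 0) := by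
  simp only [pow_mul_poissonGammaMixture]
  exact integrable_tsum_of_summable_integral_norm
    (integrableOn_poissonGammaMixture_term hb hc (z / c) k)
    (summable_setIntegral_norm_poissonGammaMixture_term hb hc (z / c) k)

theorem setIntegral_pow_mul_poissonGammaMixture (hb : 0 < b) (hc : 0 < c) (z : ℝ) (k : ℕ) :
    ∫ v in Set.Ioi 0, v ^ k * poissonGammaMixture b c z v = ∑ ij ∈ antidiagonal k,
      k.choose ij.1 * (Gamma (b + k) / Gamma (b + ij.1)) * c ^ ij.2 * z ^ ij.1 := by
  have hinterchange := hasSum_integral_of_summable_integral_norm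
    (integrableOn_poissonGammaMixture_term hb hc (z / c) k)
    (summable_setIntegral_norm_poissonGammaMixture_term hb hc (z / c) k)
  have hterm (n : ℕ) :
      ∫ v in Set.Ioi 0, poissonWeight (z / c) n * (v ^ k * gammaPDFReal (n + b) c⁻¹ v) =
        poissonWeight (z / c) n * (Gamma (n + b + k) / Gamma (n + b)) * c ^ k := by
    rw [integral_const_mul, setIntegral_pow_mul_gammaPDFReal (by positivity) (inv_pos.2 hc),
      inv_pow, div_inv_eq_mul, mul_assoc]
  simp only [hterm, ← pow_mul_poissonGammaMixture] at hinterchange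
  rw [hinterchange.unique ((hasSum_poissonWeight_mul_Gamma_div_Gamma hb (z / c) k).mul_right _),
    sum_mul]
  refine sum_congr rfl fun ij hij => ?_
  rw [← mem_antidiagonal.1 hij, pow_add, div_pow]
  field_simp

theorem integrableOn_eval_mul_poissonGammaMixture (hb : 0 < b) (hc : 0 < c) (z : ℝ) (p : ℝ[X]) :
    IntegrableOn (fun v => p.eval v * poissonGammaMixture b c z v) (Set.Ioi 0) := by
  induction p using Polynomial.induction_on' with
  | add p q hp hq =>
    simp only [eval_add, add_mul]
    exact hp.add hq
  | monomial k r =>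
    simp only [eval_monomial, mul_assoc]
    exact (integrableOn_pow_mul_poissonGammaMixture hb hc z k).const_mul r

theorem setIntegral_eval_mul_poissonGammaMixture (hb : 0 < b) (hc : 0 < c) (z : ℝ) (p : ℝ[X]) :
    ∫ v in Set.Ioi 0, p.eval v * poissonGammaMixture b c z v = (gammaTaylor b c p).eval z := by
  induction p using Polynomial.induction_on' with
  | add p q hp hq =>
    simp only [eval_add, add_mul, gammaTaylor_add]
    rw [integral_add (integrableOn_eval_mul_poissonGammaMixture hb hc z p)
      (integrableOn_eval_mul_poissonGammaMixture hb hc z q), hp, hq]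
  | monomial k r =>
    simp only [eval_monomial, mul_assoc r]
    rw [integral_const_mul, setIntegral_pow_mul_poissonGammaMixture hb hc,
      eval_gammaTaylor_monomial]

end PoissonGammaMixture

section BesselKernels

theorem div_rpow_mul_sqrt_div_rpow {c z v : ℝ} (hc : 0 < c) (hz : 0 < z) (hv : 0 < v) (ν : ℝ)
    (n : ℕ) :
    (v / z) ^ (ν / 2) * (√(z * v) / c) ^ (2 * (n : ℝ) + ν) =
      (z / c) ^ n * v ^ (n + ν) * c⁻¹ ^ (n + ν) := by
  have hzν : z ^ (ν / 2) ≠ 0 := (rpow_pos_of_pos hz _).ne'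
  have hsqrt : √(z * v) ^ (2 * (n : ℝ) + ν) = z ^ n * z ^ (ν / 2) * (v ^ n * v ^ (ν / 2)) := by
    rw [sqrt_eq_rpow, ← rpow_mul (by positivity), mul_rpow hz.le hv.le,
      show 1 / 2 * (2 * (n : ℝ) + ν) = ν / 2 + n by ring, rpow_add_natCast hz.ne',
      rpow_add_natCast hv.ne', mul_comm (z ^ n), mul_comm (v ^ n)]
  have hvν : v ^ ((n : ℝ) + ν) = v ^ n * (v ^ (ν / 2) * v ^ (ν / 2)) := by
    rw [← rpow_add hv, add_halves, rpow_add hv, rpow_natCast]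
  have hcν : c ^ (2 * (n : ℝ) + ν) = c ^ n * c ^ ((n : ℝ) + ν) := by
    rw [← rpow_natCast, ← rpow_add hc]
    ring_nf
  rw [div_rpow (sqrt_nonneg _) hc.le, div_rpow hv.le hz.le, inv_rpow hc.le, hsqrt, hvν, hcν,
    div_pow]
  field_simp

/-- `ε = 1` is the series of `I_ν` and `ε = -1` that of `J_ν`. -/
theorem besselSeries_eq_poissonGammaMixture {c z v : ℝ} (hc : 0 < c) (hz : 0 < z) (hv : 0 < v)
    (ν ε : ℝ) :
    c⁻¹ * (v / z) ^ (ν / 2) * exp (-(ε * z + v) / c) *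
        ∑' n : ℕ, ε ^ n / (Gamma (n + 1) * Gamma (n + 1 + ν)) *
          (√(z * v) / c) ^ (2 * (n : ℝ) + ν) =
      poissonGammaMixture (ν + 1) c (ε * z) v := by
  rw [poissonGammaMixture, ← tsum_mul_left]
  refine tsum_congr fun n => ?_
  have hexp : exp (-(ε * z + v) / c) = exp (-(ε * z / c)) * exp (-(c⁻¹ * v)) := by
    rw [← exp_add]
    ring_nf
  have hcν : c⁻¹ ^ ((n : ℝ) + ν + 1) = c⁻¹ ^ ((n : ℝ) + ν) * c⁻¹ :=
    rpow_add_one (inv_pos.2 hc).ne' _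
  calc
    _ = c⁻¹ * exp (-(ε * z + v) / c) * (ε ^ n / (Gamma (n + 1) * Gamma (n + 1 + ν))) *
        ((v / z) ^ (ν / 2) * (√(z * v) / c) ^ (2 * (n : ℝ) + ν)) := by ring
    _ = _ := by
      rw [div_rpow_mul_sqrt_div_rpow hc hz hv, hexp, poissonWeight, gammaPDFReal, if_pos hv.le,
        Gamma_nat_eq_factorial, ← add_assoc, add_sub_cancel_right, hcν, mul_div_assoc ε,
        mul_pow ε, add_right_comm (n : ℝ) 1 ν]
      ring

variable {ν t x y v : ℝ}

theorem besqP_eq_poissonGammaMixture (ht : 0 < t) (hx : 0 < x) (hy : 0 < y) :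
    besqP ν t y x = poissonGammaMixture (ν + 1) (2 * t) x y := by
  have h := besselSeries_eq_poissonGammaMixture (by positivity : 0 < 2 * t) hx hy ν 1
  rw [one_mul] at h
  simp only [← h, besqP, besselI, one_pow, one_div, div_div, mul_comm t 2]

theorem besqQ_eq_poissonGammaMixture (ht : 0 < t) (hv : 0 < v) (hy : 0 < y) :
    besqQ ν t v y = poissonGammaMixture (ν + 1) (2 * t) (-y) v := by
  have h := besselSeries_eq_poissonGammaMixture (by positivity : 0 < 2 * t) hy hv ν (-1)
  rw [neg_one_mul, show -(-y + v) = y - v by ring, mul_comm y v] at h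
  simp only [← h, besqQ, besselJ, one_div, div_div, mul_comm t 2]

theorem setIntegral_eval_mul_besqP (hν : -1 < ν) (ht : 0 < t) (hx : 0 < x) (p : ℝ[X]) :
    ∫ y in Set.Ioi 0, p.eval y * besqP ν t y x = (gammaTaylor (ν + 1) (2 * t) p).eval x := by
  rw [← setIntegral_eval_mul_poissonGammaMixture (by linarith) (by positivity)]
  exact setIntegral_congr_fun measurableSet_Ioi fun y hy =>
    congrArg (p.eval y * ·) (besqP_eq_poissonGammaMixture ht hx hy)

theorem setIntegral_besqQ_mul_eval (hν : -1 < ν) (ht : 0 < t) (hy : 0 < y) (p : ℝ[X]) :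
    ∫ v in Set.Ioi 0, besqQ ν t v y * p.eval v =
      (gammaTaylor (ν + 1) (2 * t) p).eval (-y) := by
  rw [← setIntegral_eval_mul_poissonGammaMixture (by linarith) (by positivity)]
  exact setIntegral_congr_fun measurableSet_Ioi fun v hv =>
    (congrArg (· * p.eval v) (besqQ_eq_poissonGammaMixture ht hv hy)).trans (mul_comm _ _)

end BesselKernels

theorem typeIIflow_eq_setIntegral_besqQ_mul_eval (ν : ℝ) {m : ℕ} (a : Fin m → ℝ) (t x : ℝ) :
    typeIIflow ν a t x =
      ∫ v in Set.Ioi 0, besqQ ν t v x * (∏ k, (-X - C (a k))).eval v := by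
  simp [typeIIflow, eval_prod]

theorem typeIIflow_backward_general {ν : ℝ} (hν : -1 < ν) (p : ℝ[X]) {s t x : ℝ} (hs : 0 < s)
    (hst : s < t) (hx : 0 < x) :
    ∫ y in Set.Ioi 0, (∫ v in Set.Ioi 0, besqQ ν t v y * p.eval v) * besqP ν (t - s) y x =
      ∫ v in Set.Ioi 0, besqQ ν s v x * p.eval v := by
  have hbackward : ∀ y ∈ Set.Ioi (0 : ℝ), ∫ v in Set.Ioi 0, besqQ ν t v y * p.eval v =
      ((gammaTaylor (ν + 1) (2 * t) p).comp (C (-1) * X)).eval y := fun y hy => by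
    rw [setIntegral_besqQ_mul_eval hν (hs.trans hst) hy]
    simp
  rw [setIntegral_congr_fun measurableSet_Ioi fun y hy =>
      congrArg (· * besqP ν (t - s) y x) (hbackward y hy),
    setIntegral_eval_mul_besqP hν (sub_pos.2 hst) hx, gammaTaylor_comp_C_mul_X,
    gammaTaylor_gammaTaylor (by linarith), setIntegral_besqQ_mul_eval hν hs hx,
    show -1 * (2 * (t - s)) + 2 * t = 2 * s by ring]
  simp

/-- `∫₀^∞ P_t(y) p^{(ν)}(t−s, y | x) dy = P_s(x)` for `0 < s < t`. -/
theorem typeIIflow_backward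
    (ν : ℝ) (hν : -1 < ν) (m : ℕ) (a : Fin m → ℝ) (hapos : ∀ k, 0 < a k)
    (s t : ℝ) (hs : 0 < s) (hst : s < t) (x : ℝ) (hx : 0 < x) :
    ∫ y in Set.Ioi (0 : ℝ), typeIIflow ν a t y * besqP ν (t - s) y x
      = typeIIflow ν a s x := by
  simp only [typeIIflow_eq_setIntegral_besqQ_mul_eval]
  exact typeIIflow_backward_general hν _ hs hst hx
end
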